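/- Let (u,v) be an axisymmetric (φ-independent) harmonic map from B₁∖Γ to the hyperbolic plane, and suppose there are constants a > 0, b ∈ (−1,1), α ∈ (1/2,1), β > 0 and C > 0 such that for all integers l,k ≥ 0 with l+k ≤ 1 and all 0 < r < 1/2: max_{S²}( |(r∂_r)^l ∇_{g₀}^k (u(r,·) − u_{a,b})| + e^{(3+α−k)u_{a,b}} |(r∂_r)^l ∇_{g₀}^k (v(r,·) − v_{a,b})| ) ≤ C r^β. Let 𝛂 be a C¹ function of (ρ,z) on {(ρ,z) : 0 < r < 1/2, ρ > 0} satisfying the quadrature system ∂_ρ𝛂 = 2∂_ρu + ρ⁻¹ + ρ( (∂_ρu)² − (∂_zu)² + e^{4u}((∂_ρv)² − (∂_zv)²) ) and ∂_z𝛂 = 2∂_zu + 2ρ( ∂_ρu ∂_zu + e^{4u} ∂_ρv ∂_zv ). Then there exist constants 𝛂₀, C' > 0 and β' > 0 such that |𝛂(r,θ) − ln(1 + cos²θ + 2b·cosθ) − 𝛂₀| ≤ C' r^{β'} for all 0 < r < 1/2 and θ ∈ (0,π). In particular, if 𝛂 extends continuously to the punctured axis with constant value 𝐛₊ on Γ₊∩B_{1/2}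 and constant value 𝐛₋ on Γ₋∩B_{1/2}, then 𝐛₊ − 𝐛₋ = ln( (1+b)/(1−b) ). -/

import Mathlib

open Real MeasureTheory Set Filter

noncomputable section

/-- `θ`-partial derivative of a function of `(θ, φ)`. -/
def pdθ (f : ℝ → ℝ → ℝ) : ℝ → ℝ → ℝ := fun θ φ => deriv (fun x => f x φ) θ

/-- `φ`-partial derivative of a function of `(θ, φ)`. -/
def pdφ (f : ℝ → ℝ → ℝ) : ℝ → ℝ → ℝ := fun θ φ => deriv (fun x => f θ x) φ

/-- coordinate derivative in direction `i` (`0 = θ`, `1 = φ`). -/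
def pder2 (i : Fin 2) : (ℝ → ℝ → ℝ) → (ℝ → ℝ → ℝ) := if i = 0 then pdθ else pdφ

/-- Christoffel symbols `Γ^m_{i j}` of the round metric on `S²` in `(θ, φ)`. -/
def christoffel (m i j : Fin 2) (θ : ℝ) : ℝ :=
  if m = 0 ∧ i = 1 ∧ j = 1 then -(Real.sin θ * Real.cos θ)
  else if m = 1 ∧ ((i = 0 ∧ j = 1) ∨ (i = 1 ∧ j = 0)) then Real.cos θ / Real.sin θ
  else 0

/-- covariant derivative (in the round metric) of a `k`-tensor on `S²`,
given by its coordinate components. -/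
def covDer {k : ℕ} (T : (Fin k → Fin 2) → ℝ → ℝ → ℝ) :
    (Fin (k + 1) → Fin 2) → ℝ → ℝ → ℝ := fun I θ φ =>
  pder2 (I 0) (T fun j => I j.succ) θ φ
    - ∑ j : Fin k, ∑ m : Fin 2,
        christoffel m (I 0) (I j.succ) θ *
          T (Function.update (fun j' => I j'.succ) j m) θ φ

/-- the `k`-th covariant derivative of a function on `S²`. -/
def covIter (f : ℝ → ℝ → ℝ) : (k : ℕ) → (Fin k → Fin 2) → ℝ → ℝ → ℝ
  | 0 => fun _ => f
  | k + 1 => covDer (covIter f k)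

/-- inverse-metric weight used to compute tensor norms. -/
def sphWeight (i : Fin 2) (θ : ℝ) : ℝ := if i = 0 then 1 else (Real.sin θ ^ 2)⁻¹

/-- `|∇_{g₀}^k f|`, the norm of the `k`-th covariant derivative in the round metric. -/
def covNorm (k : ℕ) (f : ℝ → ℝ → ℝ) (θ φ : ℝ) : ℝ :=
  Real.sqrt (∑ I : Fin k → Fin 2, (∏ j, sphWeight (I j) θ) * (covIter f k I θ φ) ^ 2)

/-- `∇_{g₀}f·∇_{g₀}h` on the round sphere. -/
def gradDotS2 (f g : ℝ → ℝ → ℝ) (θ φ : ℝ) : ℝ :=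
  pdθ f θ φ * pdθ g θ φ + (Real.sin θ ^ 2)⁻¹ * pdφ f θ φ * pdφ g θ φ

/-- `|∇_{g₀}f|²` on the round sphere. -/
def gradNormSqS2 (f : ℝ → ℝ → ℝ) (θ φ : ℝ) : ℝ := gradDotS2 f f θ φ

/-- `Δ_{g₀}f`, the round Laplacian in coordinates. -/
def lapS2 (f : ℝ → ℝ → ℝ) (θ φ : ℝ) : ℝ :=
  pdθ (pdθ f) θ φ + (Real.cos θ / Real.sin θ) * pdθ f θ φ +
    (Real.sin θ ^ 2)⁻¹ * pdφ (pdφ f) θ φ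

/-- integral over `S²` with respect to `dvol_{g₀} = sinθ dθ dφ`. -/
def sphInt (f : ℝ → ℝ → ℝ) : ℝ :=
  ∫ θ in Ioo (0 : ℝ) π, (∫ φ in Ioo (0 : ℝ) (2 * π), f θ φ) * Real.sin θ

/-- round distance between the points with coordinates `(θ, φ)` and `(θ', φ')`. -/
def sDist (θ φ θ' φ' : ℝ) : ℝ :=
  Real.arccos (Real.cos θ * Real.cos θ' + Real.sin θ * Real.sin θ' * Real.cos (φ - φ'))

/-- a function on `S²` (in coordinates), of class `C^k`, with bounded covariant
derivatives up to order `k`. -/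
def CkSphere (k : ℕ) (f : ℝ → ℝ → ℝ) : Prop :=
  ContDiffOn ℝ k (fun p : ℝ × ℝ => f p.1 p.2) (Ioo 0 π ×ˢ (univ : Set ℝ)) ∧
  (∀ θ φ : ℝ, f θ (φ + 2 * π) = f θ φ) ∧
  ∃ C : ℝ, ∀ j ≤ k, ∀ θ ∈ Ioo (0 : ℝ) π, ∀ φ : ℝ, covNorm j f θ φ ≤ C

/-- a smooth function on `S²` (in coordinates), with bounded covariant derivatives
of all orders. -/
def SmoothSphere (f : ℝ → ℝ → ℝ) : Prop :=
  ContDiffOn ℝ (⊤ : ℕ∞) (fun p : ℝ × ℝ => f p.1 p.2) (Ioo 0 π ×ˢ (univ : Set ℝ)) ∧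
  (∀ θ φ : ℝ, f θ (φ + 2 * π) = f θ φ) ∧
  ∀ j : ℕ, ∃ C : ℝ, ∀ θ ∈ Ioo (0 : ℝ) π, ∀ φ : ℝ, covNorm j f θ φ ≤ C
/-- Euclidean 3-space. -/
abbrev E3 := EuclideanSpace ℝ (Fin 3)

/-- the `i`-th standard basis vector. -/
def e3 (i : Fin 3) : E3 := EuclideanSpace.single i 1

/-- partial derivative in the `i`-th coordinate direction. -/
def pd3 (i : Fin 3) (f : E3 → ℝ) (x : E3) : ℝ := fderiv ℝ f x (e3 i)

/-- the Euclidean Laplacian `Δf`. -/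
def lap3 (f : E3 → ℝ) (x : E3) : ℝ := ∑ i : Fin 3, pd3 i (fun y => pd3 i f y) x

/-- the Euclidean inner product of gradients, `∇f·∇g`. -/
def dot3 (f g : E3 → ℝ) (x : E3) : ℝ := ∑ i : Fin 3, pd3 i f x * pd3 i g x

/-- the `z`-axis `Γ ⊆ ℝ³`. -/
def axisΓ : Set E3 := {x : E3 | x 0 = 0 ∧ x 1 = 0}

/-- the open unit ball `B₁ ⊆ ℝ³`. -/
def B1 : Set E3 := Metric.ball (0 : E3) 1

/-- the cylindrical radius `ρ = √(x₀² + x₁²)`. -/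
def ρc (x : E3) : ℝ := Real.sqrt ((x 0) ^ 2 + (x 1) ^ 2)

/-- the point with spherical coordinates `(r, θ, φ)`. -/
def sph (r θ φ : ℝ) : E3 :=
  (EuclideanSpace.equiv (Fin 3) ℝ).symm
    ![r * Real.sin θ * Real.cos φ, r * Real.sin θ * Real.sin φ, r * Real.cos θ]

/-- the point with cylindrical coordinates `(ρ, 0, z)`. -/
def cylPt (ρ z : ℝ) : E3 := (EuclideanSpace.equiv (Fin 3) ℝ).symm ![ρ, 0, z]

/-- the radial operator `r∂_r` on functions of spherical coordinates. -/
def Dr (F : ℝ → ℝ → ℝ → ℝ) : ℝ → ℝ → ℝ → ℝ :=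
  fun r θ φ => r * deriv (fun s => F s θ φ) r

/-- `ρ`-partial derivative of a function of `(ρ, z)`. -/
def dρ (f : ℝ → ℝ → ℝ) (ρ z : ℝ) : ℝ := deriv (fun s => f s z) ρ

/-- `z`-partial derivative of a function of `(ρ, z)`. -/
def dz (f : ℝ → ℝ → ℝ) (ρ z : ℝ) : ℝ := deriv (fun s => f ρ s) z

/-- a harmonic map `(u,v) : Ω → ℍ²` (horospherical coordinates, curvature `−2`). -/
def HarmonicPair (u v : E3 → ℝ) (Ω : Set E3) : Prop :=
  ContDiffOn ℝ 3 u Ω ∧ ContDiffOn ℝ 3 v Ω ∧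
  ∀ x ∈ Ω, lap3 u x = 2 * Real.exp (4 * u x) * dot3 v v x ∧
    lap3 v x = -4 * dot3 u v x

/-- `f` is `C^{3,α}` on `s`: it is `C³` there and its third derivatives are
`α`-Hölder on compact subsets. -/
def C3HolderOn (α : ℝ) (f : E3 → ℝ) (s : Set E3) : Prop :=
  ContDiffOn ℝ 3 f s ∧
  ∀ K : Set E3, K ⊆ s → IsCompact K →
    ∃ C : NNReal, HolderOnWith C α.toNNReal (iteratedFDerivWithin ℝ 3 f s) K

/-- `(f, plus its singular part) ∈ C^{3,α}(S²)` in coordinates: `C³` with bounded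
covariant derivatives, `2π`-periodic in `φ`, and third covariant derivative
`α`-Hölder (componentwise) with respect to the round distance. -/
def SphHolder3 (α : ℝ) (f : ℝ → ℝ → ℝ) : Prop :=
  ContDiffOn ℝ 3 (fun p : ℝ × ℝ => f p.1 p.2) (Ioo 0 π ×ˢ (univ : Set ℝ)) ∧
  (∀ θ φ : ℝ, f θ (φ + 2 * π) = f θ φ) ∧
  ∃ C : ℝ, (∀ k ≤ 3, ∀ θ ∈ Ioo (0 : ℝ) π, ∀ φ : ℝ, covNorm k f θ φ ≤ C) ∧
    ∀ I : Fin 3 → Fin 2, ∀ θ ∈ Ioo (0 : ℝ) π, ∀ θ' ∈ Ioo (0 : ℝ) π, ∀ φ φ' : ℝ,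
      |covIter f 3 I θ φ - covIter f 3 I θ' φ'| ≤ C * sDist θ φ θ' φ' ^ α

/-- the extreme-Kerr-type geodesic `u_{a,b}`. -/
def uab (a b θ : ℝ) : ℝ :=
  -Real.log (Real.sin θ) -
    (1 / 2) * Real.log (2 * a * Real.sqrt (1 - b ^ 2) /
      (1 + Real.cos θ ^ 2 + 2 * b * Real.cos θ))

/-- the extreme-Kerr-type geodesic `v_{a,b}`. -/
def vab (a b θ : ℝ) : ℝ :=
  a * (b + b * Real.cos θ ^ 2 + 2 * Real.cos θ) /
    (1 + Real.cos θ ^ 2 + 2 * b * Real.cos θ)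
open Asymptotics

/-- `1 + cos² θ + 2 b cos θ`. -/
def DD (b θ : ℝ) : ℝ := 1 + Real.cos θ ^ 2 + 2 * b * Real.cos θ

lemma DD_lower (b θ : ℝ) : 1 - b ^ 2 ≤ DD b θ := by
  unfold DD; nlinarith [sq_nonneg (Real.cos θ + b)]

lemma one_sub_sq_pos {b : ℝ} (hb : b ∈ Ioo (-1 : ℝ) 1) : 0 < 1 - b ^ 2 := by
  nlinarith [hb.1, hb.2]

lemma DD_pos {b : ℝ} (hb : b ∈ Ioo (-1 : ℝ) 1) (θ : ℝ) : 0 < DD b θ :=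
  lt_of_lt_of_le (one_sub_sq_pos hb) (DD_lower b θ)

lemma hasDerivAt_DD (b θ : ℝ) :
    HasDerivAt (DD b) (-2 * Real.sin θ * (Real.cos θ + b)) θ := by
  unfold DD
  have h := Real.hasDerivAt_cos θ
  exact HasDerivAt.congr_deriv (((h.pow 2).const_add 1).add (h.const_mul (2 * b)))
    (by norm_num; ring)

lemma hasDerivAt_logDD {b : ℝ} (hb : b ∈ Ioo (-1 : ℝ) 1) (θ : ℝ) :
    HasDerivAt (fun t => Real.log (DD b t)) (-2 * Real.sin θ * (Real.cos θ + b) / DD b θ) θ :=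
  (hasDerivAt_DD b θ).log (DD_pos hb θ).ne'

lemma uab_eq {a b : ℝ} (ha : 0 < a) (hb : b ∈ Ioo (-1 : ℝ) 1) (θ : ℝ) :
    uab a b θ = -Real.log (Real.sin θ) + (1 / 2) * Real.log (DD b θ)
      - (1 / 2) * Real.log (2 * a * Real.sqrt (1 - b ^ 2)) := by
  have h1 : 0 < Real.sqrt (1 - b ^ 2) := Real.sqrt_pos.2 (one_sub_sq_pos hb)
  have h2 := DD_pos hb θ
  unfold uab
  rw [← DD, Real.log_div (by positivity) h2.ne']
  ring

lemma hasDerivAt_uab {a b : ℝ} (ha : 0 < a) (hb : b ∈ Ioo (-1 : ℝ) 1) {θ : ℝ}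
    (hθ : θ ∈ Ioo (0 : ℝ) π) :
    HasDerivAt (uab a b) (-(Real.cos θ / Real.sin θ)
      - Real.sin θ * (Real.cos θ + b) / DD b θ) θ := by
  have hs : 0 < Real.sin θ := Real.sin_pos_of_mem_Ioo hθ
  have e : uab a b = fun θ => -Real.log (Real.sin θ) + (1 / 2) * Real.log (DD b θ)
      - (1 / 2) * Real.log (2 * a * Real.sqrt (1 - b ^ 2)) := funext (uab_eq ha hb)
  rw [e]
  exact HasDerivAt.congr_deriv ((((Real.hasDerivAt_sin θ).log hs.ne').neg.add
    ((hasDerivAt_logDD hb θ).const_mul (1 / 2))).sub_const _) (by ring)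

lemma hasDerivAt_vab {a b : ℝ} (hb : b ∈ Ioo (-1 : ℝ) 1) (θ : ℝ) :
    HasDerivAt (vab a b) (-2 * a * (1 - b ^ 2) * Real.sin θ ^ 3 / DD b θ ^ 2) θ := by
  have hD := (DD_pos hb θ).ne'
  have h := Real.hasDerivAt_cos θ
  have hN : HasDerivAt (fun t => a * (b + b * Real.cos t ^ 2 + 2 * Real.cos t))
      (a * (b * (2 * Real.cos θ * (-Real.sin θ)) + 2 * (-Real.sin θ))) θ := by
    exact HasDerivAt.congr_deriv
      (((((h.pow 2).const_mul b).const_add b).add (h.const_mul 2)).const_mul a) (by norm_num)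
  have := hN.div (hasDerivAt_DD b θ) hD
  have e : vab a b = (fun t => a * (b + b * Real.cos t ^ 2 + 2 * Real.cos t)) / DD b := rfl
  rw [e]
  refine this.congr_deriv ?_
  congr 1
  have hsc := Real.sin_sq_add_cos_sq θ
  unfold DD
  symm
  have : Real.sin θ ^ 3 = Real.sin θ * (1 - Real.cos θ ^ 2) := by
    linear_combination Real.sin θ * hsc
  rw [this]
  ring

lemma exp_two_uab {a b : ℝ} (ha : 0 < a) (hb : b ∈ Ioo (-1 : ℝ) 1) {θ : ℝ}
    (hθ : θ ∈ Ioo (0 : ℝ) π) :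
    Real.exp (2 * uab a b θ) =
      DD b θ / (Real.sin θ ^ 2 * (2 * a * Real.sqrt (1 - b ^ 2))) := by
  have hs : 0 < Real.sin θ := Real.sin_pos_of_mem_Ioo hθ
  have h1 : 0 < Real.sqrt (1 - b ^ 2) := Real.sqrt_pos.2 (one_sub_sq_pos hb)
  have h2 := DD_pos hb θ
  have : 2 * uab a b θ = Real.log
      (DD b θ / (Real.sin θ ^ 2 * (2 * a * Real.sqrt (1 - b ^ 2)))) := by
    rw [uab_eq ha hb, Real.log_div h2.ne' (by positivity),
      Real.log_mul (x := Real.sin θ ^ 2) (by positivity) (by positivity), Real.log_pow]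
    push_cast; ring
  rw [this, Real.exp_log (by positivity)]

lemma exp_mul_vab {a b : ℝ} (ha : 0 < a) (hb : b ∈ Ioo (-1 : ℝ) 1) {θ : ℝ}
    (hθ : θ ∈ Ioo (0 : ℝ) π) :
    Real.exp (2 * uab a b θ) * (-2 * a * (1 - b ^ 2) * Real.sin θ ^ 3 / DD b θ ^ 2)
      = -Real.sin θ * Real.sqrt (1 - b ^ 2) / DD b θ := by
  have hs : 0 < Real.sin θ := Real.sin_pos_of_mem_Ioo hθ
  have h1 : 0 < Real.sqrt (1 - b ^ 2) := Real.sqrt_pos.2 (one_sub_sq_pos hb)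
  have h2 := DD_pos hb θ
  have h3 : 1 - b ^ 2 = Real.sqrt (1 - b ^ 2) ^ 2 := (Real.sq_sqrt (one_sub_sq_pos hb).le).symm
  rw [exp_two_uab ha hb hθ]
  generalize Real.sqrt (1 - b ^ 2) = σ at *
  rw [h3]
  field_simp

/-- the unit speed identity -/
lemma unit_speed {b : ℝ} (hb : b ∈ Ioo (-1 : ℝ) 1) (θ : ℝ) :
    (Real.cos θ + Real.sin θ ^ 2 * (Real.cos θ + b) / DD b θ) ^ 2
      + Real.sin θ ^ 2 * (-Real.sin θ * Real.sqrt (1 - b ^ 2) / DD b θ) ^ 2 = 1 := by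
  have h2 := (DD_pos hb θ).ne'
  have h3 := (Real.sq_sqrt (one_sub_sq_pos hb).le)
  have hs : Real.sin θ ^ 2 = 1 - Real.cos θ ^ 2 := Real.sin_sq θ
  rw [div_pow, mul_pow, neg_sq, h3, hs]
  field_simp
  unfold DD
  ring

lemma uab_lower {a b : ℝ} (ha : 0 < a) (hb : b ∈ Ioo (-1 : ℝ) 1) :
    ∃ N : ℝ, 0 ≤ N ∧ ∀ θ ∈ Ioo (0 : ℝ) π, -N ≤ uab a b θ := by
  refine ⟨|(1 / 2) * Real.log (1 - b ^ 2)
      - (1 / 2) * Real.log (2 * a * Real.sqrt (1 - b ^ 2))|, abs_nonneg _, fun θ hθ => ?_⟩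
  have hs : 0 < Real.sin θ := Real.sin_pos_of_mem_Ioo hθ
  have h1 : Real.log (Real.sin θ) ≤ 0 := Real.log_nonpos hs.le (Real.sin_le_one θ)
  have h2 := Real.log_le_log (one_sub_sq_pos hb) (DD_lower b θ)
  rw [uab_eq ha hb]
  have := neg_abs_le ((1 / 2) * Real.log (1 - b ^ 2)
      - (1 / 2) * Real.log (2 * a * Real.sqrt (1 - b ^ 2)))
  linarith

lemma abs_exp_sub_one_le' (x : ℝ) : |Real.exp x - 1| ≤ |x| * Real.exp |x| := by
  have h1 := Real.add_one_le_exp x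
  have h2 := Real.add_one_le_exp (-x)
  have h3 : 1 ≤ Real.exp |x| := Real.one_le_exp (abs_nonneg x)
  have h4 : Real.exp x ≤ Real.exp |x| := Real.exp_le_exp.2 (le_abs_self x)
  have h5 : Real.exp (-x) * Real.exp x = 1 := by rw [← Real.exp_add]; simp
  have h6 : Real.exp x - 1 ≤ x * Real.exp x := by nlinarith [Real.exp_pos x]
  have h7 : x * Real.exp x ≤ |x| * Real.exp |x| :=
    mul_le_mul (le_abs_self x) h4 (Real.exp_pos x).le (abs_nonneg x)
  rw [abs_le]; constructor
  · nlinarith [neg_abs_le x, abs_nonneg x]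
  · linarith

lemma covNorm_zero (f : ℝ → ℝ → ℝ) (θ φ : ℝ) : covNorm 0 f θ φ = |f θ φ| := by
  unfold covNorm
  simp [covIter, Real.sqrt_sq_eq_abs]

lemma le_covNorm_one (f : ℝ → ℝ → ℝ) (θ φ : ℝ) :
    |deriv (fun t => f t φ) θ| ≤ covNorm 1 f θ φ := by
  unfold covNorm
  rw [← Real.sqrt_sq_eq_abs]
  apply Real.sqrt_le_sqrt
  have := Finset.single_le_sum (s := Finset.univ)
    (f := fun I : Fin 1 → Fin 2 => (∏ j, sphWeight (I j) θ) * (covIter f 1 I θ φ) ^ 2)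
    (fun I _ => mul_nonneg (Finset.prod_nonneg fun j _ => by
      unfold sphWeight; split_ifs <;> positivity) (sq_nonneg _))
    (Finset.mem_univ (fun _ => 0))
  simpa [sphWeight, covIter, covDer, pder2, pdθ] using this

lemma covNorm_nonneg (k : ℕ) (f : ℝ → ℝ → ℝ) (θ φ : ℝ) : 0 ≤ covNorm k f θ φ :=
  Real.sqrt_nonneg _

lemma partials {F : ℝ → ℝ → ℝ} {x y : ℝ}
    (h : DifferentiableAt ℝ (fun p : ℝ × ℝ => F p.1 p.2) (x, y)) (m n : ℝ) :
    fderiv ℝ (fun p : ℝ × ℝ => F p.1 p.2) (x, y) (m, n) = m * dρ F x y + n * dz F x y := by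
  have h1 : HasDerivAt (fun s => F s y)
      (fderiv ℝ (fun p : ℝ × ℝ => F p.1 p.2) (x, y) (1, 0)) x :=
    HasFDerivAt.comp_hasDerivAt (x := x) (f := fun t : ℝ => (t, y)) h.hasFDerivAt
      ((hasDerivAt_id x).prodMk (hasDerivAt_const x y))
  have h2 : HasDerivAt (fun s => F x s)
      (fderiv ℝ (fun p : ℝ × ℝ => F p.1 p.2) (x, y) (0, 1)) y :=
    HasFDerivAt.comp_hasDerivAt (x := y) (f := fun t : ℝ => (x, t)) h.hasFDerivAt
      ((hasDerivAt_const y x).prodMk (hasDerivAt_id y))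
  unfold dρ dz
  rw [h1.deriv, h2.deriv, ← smul_eq_mul, ← smul_eq_mul, ← map_smul, ← map_smul, ← map_add]
  simp

lemma hasDerivAt_rad {F : ℝ → ℝ → ℝ} {r θ : ℝ}
    (h : DifferentiableAt ℝ (fun p : ℝ × ℝ => F p.1 p.2) (r * Real.sin θ, r * Real.cos θ)) :
    HasDerivAt (fun t => F (t * Real.sin θ) (t * Real.cos θ))
      (Real.sin θ * dρ F (r * Real.sin θ) (r * Real.cos θ)
        + Real.cos θ * dz F (r * Real.sin θ) (r * Real.cos θ)) r := by
  have h1 : HasDerivAt (fun t : ℝ => (t * Real.sin θ, t * Real.cos θ))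
      (Real.sin θ, Real.cos θ) r := by
    have := ((hasDerivAt_id r).mul_const (Real.sin θ)).prodMk
      ((hasDerivAt_id r).mul_const (Real.cos θ))
    simpa using this
  rw [← partials h]
  exact HasFDerivAt.comp_hasDerivAt (x := r) (f := fun t : ℝ => (t * Real.sin θ, t * Real.cos θ))
    h.hasFDerivAt h1

lemma hasDerivAt_ang {F : ℝ → ℝ → ℝ} {r θ : ℝ}
    (h : DifferentiableAt ℝ (fun p : ℝ × ℝ => F p.1 p.2) (r * Real.sin θ, r * Real.cos θ)) :
    HasDerivAt (fun t => F (r * Real.sin t) (r * Real.cos t))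
      (r * (Real.cos θ * dρ F (r * Real.sin θ) (r * Real.cos θ)
        - Real.sin θ * dz F (r * Real.sin θ) (r * Real.cos θ))) θ := by
  have h1 : HasDerivAt (fun t : ℝ => (r * Real.sin t, r * Real.cos t))
      (r * Real.cos θ, r * (-Real.sin θ)) θ :=
    ((Real.hasDerivAt_sin θ).const_mul r).prodMk ((Real.hasDerivAt_cos θ).const_mul r)
  have := HasFDerivAt.comp_hasDerivAt (x := θ)
    (f := fun t : ℝ => (r * Real.sin t, r * Real.cos t)) h.hasFDerivAt h1
  rw [partials h] at this
  exact this.congr_deriv (by ring)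

lemma sph_zero (r θ : ℝ) : sph r θ 0 = cylPt (r * Real.sin θ) (r * Real.cos θ) := by
  simp [sph, cylPt]

lemma sqrt_polar {r : ℝ} (hr : 0 < r) (θ : ℝ) :
    Real.sqrt ((r * Real.sin θ) ^ 2 + (r * Real.cos θ) ^ 2) = r := by
  have : (r * Real.sin θ) ^ 2 + (r * Real.cos θ) ^ 2 = r ^ 2 := by
    linear_combination r ^ 2 * Real.sin_sq_add_cos_sq θ
  rw [this, Real.sqrt_sq hr.le]

lemma diff_cyl {u : E3 → ℝ} (hu : ContDiffOn ℝ 3 u (B1 \ axisΓ)) {r θ : ℝ}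
    (hr : r ∈ Ioo (0 : ℝ) (1 / 2)) (hθ : θ ∈ Ioo (0 : ℝ) π) :
    DifferentiableAt ℝ (fun p : ℝ × ℝ => (fun ρ z => u (cylPt ρ z)) p.1 p.2)
      (r * Real.sin θ, r * Real.cos θ) := by
  have hs : 0 < Real.sin θ := Real.sin_pos_of_mem_Ioo hθ
  have hclosed : IsClosed axisΓ := by
    have h0 : IsClosed {x : E3 | x 0 = 0} := isClosed_eq (by fun_prop) continuous_const
    have h1 : IsClosed {x : E3 | x 1 = 0} := isClosed_eq (by fun_prop) continuous_const
    exact h0.inter h1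
  have hopen : IsOpen (B1 \ axisΓ) := Metric.isOpen_ball.sdiff hclosed
  have hmem : cylPt (r * Real.sin θ) (r * Real.cos θ) ∈ B1 \ axisΓ := by
    constructor
    · have : ‖cylPt (r * Real.sin θ) (r * Real.cos θ)‖ = r := by
        rw [EuclideanSpace.norm_eq, Fin.sum_univ_three]
        have h := sqrt_polar hr.1 θ
        simp only [Real.norm_eq_abs, sq_abs]
        simpa [cylPt] using h
      simp only [B1, Metric.mem_ball, dist_zero_right, this]
      linarith [hr.2]
    · intro h
      have := h.1
      simp [cylPt] at this
      rcases this with h | h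
      · linarith [hr.1]
      · linarith
  have hd : DifferentiableAt ℝ u (cylPt (r * Real.sin θ) (r * Real.cos θ)) :=
    (hu.differentiableOn (by norm_num)).differentiableAt (hopen.mem_nhds hmem)
  have hc : Differentiable ℝ (fun p : ℝ × ℝ => cylPt p.1 p.2) := by
    unfold cylPt
    apply (EuclideanSpace.equiv (Fin 3) ℝ).symm.differentiable.comp
    rw [differentiable_pi]
    intro i
    fin_cases i <;> simp <;> fun_prop
  exact DifferentiableAt.comp (f := fun p : ℝ × ℝ => cylPt p.1 p.2)
    (r * Real.sin θ, r * Real.cos θ) hd (hc _)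

/-- `r ∂_r f` in terms of cylindrical partials. -/
def Pr (f : ℝ → ℝ → ℝ) (r θ : ℝ) : ℝ :=
  r * (Real.sin θ * dρ f (r * Real.sin θ) (r * Real.cos θ)
    + Real.cos θ * dz f (r * Real.sin θ) (r * Real.cos θ))

/-- `∂_θ f` in terms of cylindrical partials. -/
def Pt (f : ℝ → ℝ → ℝ) (r θ : ℝ) : ℝ :=
  r * (Real.cos θ * dρ f (r * Real.sin θ) (r * Real.cos θ)
    - Real.sin θ * dz f (r * Real.sin θ) (r * Real.cos θ))

/-- derivative of `uab` -/
def uq (b θ : ℝ) : ℝ := -(Real.cos θ / Real.sin θ) - Real.sin θ * (Real.cos θ + b) / DD b θ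

/-- derivative of `vab` -/
def vq (a b θ : ℝ) : ℝ := -2 * a * (1 - b ^ 2) * Real.sin θ ^ 3 / DD b θ ^ 2

lemma weight_le {κ m N t X B : ℝ} (hN : 0 ≤ N) (hκ : 2 ≤ κ) (hκ' : κ ≤ 4) (ht : -N ≤ t)
    (h : Real.exp (κ * t) * |X| ≤ B) (hm : m = Real.exp (2 * t)) :
    |m * X| ≤ Real.exp (2 * N) * B := by
  have h1 : Real.exp (2 * t) ≤ Real.exp (2 * N) * Real.exp (κ * t) := by
    rw [← Real.exp_add]
    apply Real.exp_le_exp.2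
    nlinarith
  rw [hm, abs_mul, abs_of_pos (Real.exp_pos _)]
  calc Real.exp (2 * t) * |X| ≤ Real.exp (2 * N) * Real.exp (κ * t) * |X| := by gcongr
    _ = Real.exp (2 * N) * (Real.exp (κ * t) * |X|) := by ring
    _ ≤ _ := by gcongr

lemma tangent_bounds
    (u v : E3 → ℝ)
    (hu : ContDiffOn ℝ 3 u (B1 \ axisΓ)) (hv : ContDiffOn ℝ 3 v (B1 \ axisΓ))
    (a b α β C : ℝ) (ha : 0 < a) (hb : b ∈ Ioo (-1 : ℝ) 1)
    (hα : α ∈ Ioo (1 / 2 : ℝ) 1) (hC : 0 < C)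
    (htan : ∀ l k : ℕ, l + k ≤ 1 →
      ∀ r ∈ Ioo (0 : ℝ) (1 / 2), ∀ θ ∈ Ioo (0 : ℝ) π, ∀ φ : ℝ,
        covNorm k (fun θ' φ' =>
            (Dr^[l] (fun s θ'' φ'' => u (sph s θ'' φ'') - uab a b θ'')) r θ' φ') θ φ
          + Real.exp ((3 + α - k) * uab a b θ) *
            covNorm k (fun θ' φ' =>
              (Dr^[l] (fun s θ'' φ'' => v (sph s θ'' φ'') - vab a b θ'')) r θ' φ') θ φ
        ≤ C * r ^ β) :
    ∃ K : ℝ, ∀ r ∈ Ioo (0 : ℝ) (1 / 2), ∀ θ ∈ Ioo (0 : ℝ) π,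
      |u (cylPt (r * Real.sin θ) (r * Real.cos θ)) - uab a b θ| ≤ K * r ^ β ∧
      |Pr (fun ρ z => u (cylPt ρ z)) r θ| ≤ K * r ^ β ∧
      |Pt (fun ρ z => u (cylPt ρ z)) r θ - uq b θ| ≤ K * r ^ β ∧
      |Real.exp (2 * uab a b θ) * Pr (fun ρ z => v (cylPt ρ z)) r θ| ≤ K * r ^ β ∧
      |Real.exp (2 * uab a b θ) * (Pt (fun ρ z => v (cylPt ρ z)) r θ - vq a b θ)|
        ≤ K * r ^ β := by
  obtain ⟨N, hN, hlow⟩ := uab_lower ha hb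
  refine ⟨Real.exp (2 * N) * C, fun r hr θ hθ => ?_⟩
  have hrβ : 0 < r ^ β := Real.rpow_pos_of_pos hr.1 β
  have hK : C * r ^ β ≤ Real.exp (2 * N) * C * r ^ β := by
    have : 1 ≤ Real.exp (2 * N) := Real.one_le_exp (by positivity)
    have h2 : 0 < C * r ^ β := by positivity
    nlinarith
  have du := diff_cyl hu hr hθ
  have dv := diff_cyl hv hr hθ
  -- the three instances
  have t00 := htan 0 0 (by norm_num) r hr θ hθ 0
  have t10 := htan 1 0 (by norm_num) r hr θ hθ 0
  have t01 := htan 0 1 (by norm_num) r hr θ hθ 0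
  have rad : ∀ (w : E3 → ℝ) (w0 : ℝ), DifferentiableAt ℝ
      (fun p : ℝ × ℝ => (fun ρ z => w (cylPt ρ z)) p.1 p.2) (r * Real.sin θ, r * Real.cos θ) →
      r * deriv (fun s => w (sph s θ 0) - w0) r = Pr (fun ρ z => w (cylPt ρ z)) r θ := by
    intro w w0 hw
    have := (hasDerivAt_rad (F := fun ρ z => w (cylPt ρ z)) hw).sub_const w0
    simp only [sph_zero]
    rw [this.deriv]; rfl
  have ang : ∀ (w : E3 → ℝ) (w0 : ℝ → ℝ) (d : ℝ), DifferentiableAt ℝ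
      (fun p : ℝ × ℝ => (fun ρ z => w (cylPt ρ z)) p.1 p.2) (r * Real.sin θ, r * Real.cos θ) →
      HasDerivAt w0 d θ →
      deriv (fun t => w (sph r t 0) - w0 t) θ = Pt (fun ρ z => w (cylPt ρ z)) r θ - d := by
    intro w w0 d hw hw0
    have := (hasDerivAt_ang (F := fun ρ z => w (cylPt ρ z)) hw).sub hw0
    simp only [sph_zero]
    exact this.deriv
  simp only [covNorm_zero, Function.iterate_zero, id_eq, Function.iterate_one, Dr, Nat.cast_zero,
    Nat.cast_one, sub_zero] at t00 t10 t01
  rw [rad u _ du, rad v _ dv] at t10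
  have a1 := le_covNorm_one (fun θ' φ' => u (sph r θ' φ') - uab a b θ') θ 0
  have a2 := le_covNorm_one (fun θ' φ' => v (sph r θ' φ') - vab a b θ') θ 0
  rw [ang u _ _ du (hasDerivAt_uab ha hb hθ)] at a1
  rw [ang v _ _ dv (hasDerivAt_vab hb θ)] at a2
  rw [sph_zero] at t00
  have e1 : 0 ≤ Real.exp ((3 + α) * uab a b θ) := (Real.exp_pos _).le
  have e2 : 0 ≤ Real.exp ((3 + α - 1) * uab a b θ) := (Real.exp_pos _).le
  have a3 := mul_le_mul_of_nonneg_left a2 e2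
  have z1 := mul_nonneg e1 (abs_nonneg (v (sph r θ 0) - vab a b θ))
  rw [sph_zero] at z1
  have z2 := mul_nonneg e1 (abs_nonneg (Pr (fun ρ z => v (cylPt ρ z)) r θ))
  have z3 := mul_nonneg e2 (covNorm_nonneg 1 (fun θ' φ' => v (sph r θ' φ') - vab a b θ') θ 0)
  have z4 := covNorm_nonneg 1 (fun θ' φ' => u (sph r θ' φ') - uab a b θ') θ 0
  refine ⟨?_, ?_, ?_, ?_, ?_⟩
  · linarith
  · linarith
  · exact le_trans a1 (by linarith)
  · rw [mul_assoc]
    refine weight_le (κ := 3 + α) hN (by linarith [hα.1]) (by linarith [hα.2]) (hlow θ hθ) ?_ rfl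
    linarith [abs_nonneg (Pr (fun ρ z => u (cylPt ρ z)) r θ)]
  · rw [mul_assoc]
    refine weight_le (κ := 3 + α - 1) hN (by linarith [hα.1]) (by linarith [hα.2]) (hlow θ hθ) ?_ rfl
    exact le_trans a3 (by linarith)

lemma id_r {r s c x y X Y e E m q0 Q0 d p q p' q' P δ Aρ Az : ℝ} (hr : r ≠ 0) (hs : s ≠ 0)
    (hsc : s ^ 2 + c ^ 2 = 1)
    (hp : p = r * (s * x + c * y)) (hq : q = r * (c * x - s * y))
    (hp' : p' = r * (s * X + c * Y)) (hq' : q' = r * (c * X - s * Y))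
    (hd : q = q0 + d) (hP : P = m * p') (hQ : m * q' = Q0 + δ) (he : e = E * m ^ 2)
    (hU : (s * q0) ^ 2 + s ^ 2 * Q0 ^ 2 = 1)
    (hAρ : Aρ = 2 * x + (r * s)⁻¹ + (r * s) * (x ^ 2 - y ^ 2 + e * (X ^ 2 - Y ^ 2)))
    (hAz : Az = 2 * y + 2 * (r * s) * (x * y + e * X * Y)) :
    r * (s * Aρ + c * Az) =
      p * (2 + s * s * p + 2 * c * (s * q0 + s * d)) + d * (-2 * (s * q0) * s - s * s * d)
      + P * (E * (s * s * P + 2 * s * c * (Q0 + δ))) + δ * (-1 * E * s * s * (2 * Q0 + δ))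
      + (E - 1) * (-1 * s * s * Q0 * Q0) := by
  have h1 : r * (s * Aρ + c * Az) = 2 * p + 1 + s ^ 2 * (p ^ 2 - q ^ 2) + 2 * s * c * p * q
      + e * (s ^ 2 * (p' ^ 2 - q' ^ 2) + 2 * s * c * p' * q') := by
    have h0 : (r * s) * (r * s)⁻¹ = 1 := mul_inv_cancel₀ (mul_ne_zero hr hs)
    rw [hAρ, hAz, hp, hq, hp', hq']
    linear_combination h0 - r ^ 2 * (s ^ 2 * (x ^ 2 - y ^ 2) + 2 * s * c * x * y
      + e * (s ^ 2 * (X ^ 2 - Y ^ 2) + 2 * s * c * X * Y)) * hsc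
  have h2 : e * (s ^ 2 * (p' ^ 2 - q' ^ 2) + 2 * s * c * p' * q') =
      E * (s ^ 2 * (P ^ 2 - (Q0 + δ) ^ 2) + 2 * s * c * P * (Q0 + δ)) := by
    rw [← hQ, hP, he]; ring
  rw [h1, h2, hd]
  linear_combination -hU

lemma id_t {r s c x y X Y e E m q0 Q0 d p q p' q' P δ Aρ Az Y0 : ℝ} (hr : r ≠ 0) (hs : s ≠ 0)
    (hsc : s ^ 2 + c ^ 2 = 1)
    (hp : p = r * (s * x + c * y)) (hq : q = r * (c * x - s * y))
    (hp' : p' = r * (s * X + c * Y)) (hq' : q' = r * (c * X - s * Y))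
    (hd : q = q0 + d) (hP : P = m * p') (hQ : m * q' = Q0 + δ) (he : e = E * m ^ 2)
    (hU : (s * q0) ^ 2 + s ^ 2 * Q0 ^ 2 = 1) (hq0 : q0 = -(c / s) + Y0)
    (hAρ : Aρ = 2 * x + (r * s)⁻¹ + (r * s) * (x ^ 2 - y ^ 2 + e * (X ^ 2 - Y ^ 2)))
    (hAz : Az = 2 * y + 2 * (r * s) * (x * y + e * X * Y)) :
    r * (c * Aρ - s * Az) - 2 * Y0 =
      p * (-1 * s * c * p + 2 * s * (s * q0 + s * d)) + d * (2 + 2 * c * (s * q0) + s * c * d)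
      + P * (E * (-1 * s * c * P + 2 * s * s * (Q0 + δ))) + δ * (E * s * c * (2 * Q0 + δ))
      + (E - 1) * (s * c * Q0 * Q0) := by
  have h1 : r * (c * Aρ - s * Az) = 2 * q + c / s - s * c * (p ^ 2 - q ^ 2) + 2 * s ^ 2 * p * q
      + e * (-s * c * (p' ^ 2 - q' ^ 2) + 2 * s ^ 2 * p' * q') := by
    have h0 : r * (r * s)⁻¹ = 1 / s := by field_simp
    rw [hAρ, hAz, hp, hq, hp', hq', div_eq_mul_one_div c s]
    linear_combination c * h0 - r ^ 2 * (s * c * (x ^ 2 - y ^ 2) - 2 * s ^ 2 * x * y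
      + e * (s * c * (X ^ 2 - Y ^ 2) - 2 * s ^ 2 * X * Y)) * hsc
  have h2 : e * (-s * c * (p' ^ 2 - q' ^ 2) + 2 * s ^ 2 * p' * q') =
      E * (-s * c * (P ^ 2 - (Q0 + δ) ^ 2) + 2 * s ^ 2 * P * (Q0 + δ)) := by
    rw [← hQ, hP, he]; ring
  have h3 : s * c * q0 ^ 2 + s * c * Q0 ^ 2 = c / s := by
    rw [eq_div_iff hs]; linear_combination c * hU
  rw [h1, h2, hd]
  linear_combination h3 + 2 * hq0

section BigO
variable {X : Type*} {l : Filter X} {f g h : X → ℝ}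

lemma b_add (hf : f =O[l] (fun _ => (1 : ℝ))) (hg : g =O[l] (fun _ => (1 : ℝ))) :
    (fun t => f t + g t) =O[l] (fun _ => (1 : ℝ)) := hf.add hg

lemma b_sub (hf : f =O[l] (fun _ => (1 : ℝ))) (hg : g =O[l] (fun _ => (1 : ℝ))) :
    (fun t => f t - g t) =O[l] (fun _ => (1 : ℝ)) := hf.sub hg

lemma b_mul (hf : f =O[l] (fun _ => (1 : ℝ))) (hg : g =O[l] (fun _ => (1 : ℝ))) :
    (fun t => f t * g t) =O[l] (fun _ => (1 : ℝ)) := by simpa using hf.mul hg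

lemma b_const (c : ℝ) : (fun _ => c) =O[l] (fun _ => (1 : ℝ)) :=
  isBigO_const_const c one_ne_zero l

lemma b_scale (hf : f =O[l] h) (hg : g =O[l] (fun _ => (1 : ℝ))) :
    (fun t => f t * g t) =O[l] h := by simpa using hf.mul hg

lemma b_five {p d P δ E a1 a2 a3 a4 a5 : X → ℝ} (hp : p =O[l] h) (hd : d =O[l] h)
    (hP : P =O[l] h) (hδ : δ =O[l] h) (hE : (fun t => E t - 1) =O[l] h)
    (h1 : a1 =O[l] (fun _ => (1 : ℝ))) (h2 : a2 =O[l] (fun _ => (1 : ℝ)))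
    (h3 : a3 =O[l] (fun _ => (1 : ℝ))) (h4 : a4 =O[l] (fun _ => (1 : ℝ)))
    (h5 : a5 =O[l] (fun _ => (1 : ℝ))) :
    (fun t => p t * a1 t + d t * a2 t + P t * a3 t + δ t * a4 t + (E t - 1) * a5 t) =O[l] h :=
  ((((b_scale hp h1).add (b_scale hd h2)).add (b_scale hP h3)).add (b_scale hδ h4)).add
    (b_scale hE h5)

lemma err_r {s c x Q0 p d P δ E : X → ℝ} (hg : g =O[l] (fun _ => (1 : ℝ)))
    (hs : s =O[l] (fun _ => (1 : ℝ))) (hc : c =O[l] (fun _ => (1 : ℝ)))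
    (hx : x =O[l] (fun _ => (1 : ℝ))) (hQ0 : Q0 =O[l] (fun _ => (1 : ℝ)))
    (hp : p =O[l] g) (hd : d =O[l] g)
    (hP : P =O[l] g) (hδ : δ =O[l] g) (hE : (fun t => E t - 1) =O[l] g) :
    (fun t => p t * (2 + s t * s t * p t + 2 * c t * (x t + s t * d t))
      + d t * (-2 * (x t) * s t - s t * s t * d t)
      + P t * (E t * (s t * s t * P t + 2 * s t * c t * (Q0 t + δ t)))
      + δ t * (-1 * E t * s t * s t * (2 * Q0 t + δ t))
      + (E t - 1) * (-1 * s t * s t * Q0 t * Q0 t)) =O[l] g := by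
  have hp1 := hp.trans hg
  have hd1 := hd.trans hg
  have hP1 := hP.trans hg
  have hδ1 := hδ.trans hg
  have hE1 : E =O[l] (fun _ => (1 : ℝ)) := by
    simpa using b_add (hE.trans hg) (b_const (l := l) 1)
  apply b_five hp hd hP hδ hE <;>
  repeat' first | assumption | exact b_const _ | apply b_mul | apply b_sub | apply b_add

lemma err_t {s c x Q0 p d P δ E : X → ℝ} (hg : g =O[l] (fun _ => (1 : ℝ)))
    (hs : s =O[l] (fun _ => (1 : ℝ))) (hc : c =O[l] (fun _ => (1 : ℝ)))
    (hx : x =O[l] (fun _ => (1 : ℝ))) (hQ0 : Q0 =O[l] (fun _ => (1 : ℝ)))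
    (hp : p =O[l] g) (hd : d =O[l] g)
    (hP : P =O[l] g) (hδ : δ =O[l] g) (hE : (fun t => E t - 1) =O[l] g) :
    (fun t => p t * (-1 * s t * c t * p t + 2 * s t * (x t + s t * d t))
      + d t * (2 + 2 * c t * (x t) + s t * c t * d t)
      + P t * (E t * (-1 * s t * c t * P t + 2 * s t * s t * (Q0 t + δ t)))
      + δ t * (E t * s t * c t * (2 * Q0 t + δ t))
      + (E t - 1) * (s t * c t * Q0 t * Q0 t)) =O[l] g := by
  have hp1 := hp.trans hg
  have hd1 := hd.trans hg
  have hP1 := hP.trans hg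
  have hδ1 := hδ.trans hg
  have hE1 : E =O[l] (fun _ => (1 : ℝ)) := by
    simpa using b_add (hE.trans hg) (b_const (l := l) 1)
  apply b_five hp hd hP hδ hE <;>
  repeat' first | assumption | exact b_const _ | apply b_mul | apply b_sub | apply b_add

end BigO

lemma radial_limit {g g' : ℝ → ℝ} {K β : ℝ} (hβ : 0 < β)
    (hg : ∀ r ∈ Ioo (0 : ℝ) (1 / 2), HasDerivAt g (g' r) r)
    (hb : ∀ r ∈ Ioo (0 : ℝ) (1 / 2), |r * g' r| ≤ K * r ^ β) :
    ∃ A₀ : ℝ, ∀ r ∈ Ioo (0 : ℝ) (1 / 2), |g r - A₀| ≤ K / β * r ^ β := by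
  have hpow : ∀ r ∈ Ioo (0 : ℝ) (1 / 2),
      HasDerivAt (fun r : ℝ => K / β * r ^ β) (K * r ^ (β - 1)) r := by
    intro r hr
    refine ((Real.hasDerivAt_rpow_const (Or.inl hr.1.ne')).const_mul (K / β)).congr_deriv ?_
    field_simp
  have hb' : ∀ r ∈ Ioo (0 : ℝ) (1 / 2), |g' r| ≤ K * r ^ (β - 1) := by
    intro r hr
    have h := hb r hr
    have h2 : r ^ β = r * r ^ (β - 1) := by
      rw [Real.rpow_sub_one hr.1.ne']; field_simp [hr.1.ne']
    rw [abs_mul, abs_of_pos hr.1, h2] at h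
    have h3 : r * |g' r| ≤ r * (K * r ^ (β - 1)) := by linarith
    exact le_of_mul_le_mul_left h3 hr.1
  have mono : MonotoneOn (fun r => g r + K / β * r ^ β) (Ioo (0 : ℝ) (1 / 2)) := by
    apply monotoneOn_of_deriv_nonneg (convex_Ioo _ _)
    · intro r hr
      exact ((hg r hr).add (hpow r hr)).continuousAt.continuousWithinAt
    · intro r hr
      rw [interior_Ioo] at hr
      exact ((hg r hr).add (hpow r hr)).differentiableAt.differentiableWithinAt
    · intro r hr
      rw [interior_Ioo] at hr
      have : deriv (fun r => g r + K / β * r ^ β) r = _ := ((hg r hr).add (hpow r hr)).deriv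
      rw [this]
      linarith [(abs_le.1 (hb' r hr)).1]
  have anti : AntitoneOn (fun r => g r - K / β * r ^ β) (Ioo (0 : ℝ) (1 / 2)) := by
    apply antitoneOn_of_deriv_nonpos (convex_Ioo _ _)
    · intro r hr
      exact ((hg r hr).sub (hpow r hr)).continuousAt.continuousWithinAt
    · intro r hr
      rw [interior_Ioo] at hr
      exact ((hg r hr).sub (hpow r hr)).differentiableAt.differentiableWithinAt
    · intro r hr
      rw [interior_Ioo] at hr
      have : deriv (fun r => g r - K / β * r ^ β) r = _ := ((hg r hr).sub (hpow r hr)).deriv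
      rw [this]
      linarith [(abs_le.1 (hb' r hr)).2]
  have hK : ∀ r ∈ Ioo (0 : ℝ) (1 / 2), 0 ≤ K / β * r ^ β := by
    intro r hr
    have := le_trans (abs_nonneg _) (hb r hr)
    rw [div_mul_eq_mul_div]
    positivity
  have lower : ∀ r ∈ Ioo (0 : ℝ) (1 / 2), ∀ t ∈ Ioo (0 : ℝ) (1 / 2),
      g r - K / β * r ^ β ≤ g t + K / β * t ^ β := by
    intro r hr t ht
    rcases le_total t r with h | h
    · have := anti ht hr h
      simp only at this
      linarith [hK t ht]
    · have := mono hr ht h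
      simp only at this
      linarith [hK r hr]
  refine ⟨sInf ((fun r => g r + K / β * r ^ β) '' Ioo (0 : ℝ) (1 / 2)), fun r hr => ?_⟩
  have h1 : sInf ((fun r => g r + K / β * r ^ β) '' Ioo (0 : ℝ) (1 / 2)) ≤ g r + K / β * r ^ β :=
    csInf_le ⟨g r - K / β * r ^ β, by rintro _ ⟨t, ht, rfl⟩; exact lower r hr t ht⟩ ⟨r, hr, rfl⟩
  have h2 : g r - K / β * r ^ β ≤ sInf ((fun r => g r + K / β * r ^ β) '' Ioo (0 : ℝ) (1 / 2)) :=
    le_csInf ⟨_, ⟨r, hr, rfl⟩⟩ (by rintro _ ⟨t, ht, rfl⟩; exact lower r hr t ht)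
  rw [abs_le]; constructor <;> linarith

lemma axis_limit {A : ℝ → ℝ → ℝ} {b A₀ C' β σ bp : ℝ} (hb : b ∈ Ioo (-1 : ℝ) 1) (hβ : 0 < β)
    (hσ : σ = 1 ∨ σ = -1)
    (hA : ∀ r ∈ Ioo (0 : ℝ) (1 / 2), ∀ θ ∈ Ioo (0 : ℝ) π,
        |A (r * Real.sin θ) (r * Real.cos θ) - Real.log (DD b θ) - A₀| ≤ C' * r ^ β)
    (hlim : ∀ t ∈ Ioo (0 : ℝ) (1 / 2),
      Tendsto (fun ρ => A ρ (σ * t)) (nhdsWithin 0 (Ioi 0)) (nhds bp)) :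
    bp = Real.log (2 + 2 * b * σ) + A₀ := by
  have hσ2 : σ ^ 2 = 1 := by rcases hσ with h | h <;> simp [h]
  have key : ∀ t ∈ Ioo (0 : ℝ) (1 / 2), |bp - Real.log (2 + 2 * b * σ) - A₀| ≤ C' * t ^ β := by
    intro t ht
    -- the radius and the cosine as functions of ρ
    have hR : Tendsto (fun ρ : ℝ => Real.sqrt (ρ ^ 2 + t ^ 2)) (nhdsWithin 0 (Ioi 0)) (nhds t) := by
      have : ContinuousAt (fun ρ : ℝ => Real.sqrt (ρ ^ 2 + t ^ 2)) 0 := by fun_prop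
      have h := this.tendsto
      simp only [ne_eq, OfNat.ofNat_ne_zero, not_false_eq_true, zero_pow, zero_add,
        Real.sqrt_sq ht.1.le] at h
      exact h.mono_left nhdsWithin_le_nhds
    have hcos : Tendsto (fun ρ : ℝ => σ * t / Real.sqrt (ρ ^ 2 + t ^ 2)) (nhdsWithin 0 (Ioi 0))
        (nhds σ) := by
      have h := (tendsto_const_nhds (x := σ * t)).div hR ht.1.ne'
      rwa [mul_div_cancel_right₀ _ ht.1.ne'] at h
    have hpos : 0 < 2 + 2 * b * σ := by
      rcases hσ with h | h <;> rw [h] <;> linarith [hb.1, hb.2]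
    have hlog : Tendsto (fun ρ : ℝ => Real.log (1 + (σ * t / Real.sqrt (ρ ^ 2 + t ^ 2)) ^ 2
        + 2 * b * (σ * t / Real.sqrt (ρ ^ 2 + t ^ 2)))) (nhdsWithin 0 (Ioi 0))
        (nhds (Real.log (2 + 2 * b * σ))) := by
      have h := ((hcos.pow 2).const_add 1).add (hcos.const_mul (2 * b))
      have e : 1 + σ ^ 2 + 2 * b * σ = 2 + 2 * b * σ := by rw [hσ2]; ring
      rw [e] at h
      exact h.log hpos.ne'
    have hL := (((hlim t ht).sub hlog).sub_const A₀).abs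
    have hRR : Tendsto (fun ρ : ℝ => C' * Real.sqrt (ρ ^ 2 + t ^ 2) ^ β) (nhdsWithin 0 (Ioi 0))
        (nhds (C' * t ^ β)) := (hR.rpow_const (Or.inl ht.1.ne')).const_mul C'
    refine le_of_tendsto_of_tendsto hL hRR ?_
    filter_upwards [hR.eventually (gt_mem_nhds ht.2), self_mem_nhdsWithin] with ρ h1 h2
    have hρ : 0 < ρ := h2
    set R := Real.sqrt (ρ ^ 2 + t ^ 2) with hRdef
    have hRpos : 0 < R := Real.sqrt_pos.2 (by positivity)
    have hRsq : R ^ 2 = ρ ^ 2 + t ^ 2 := Real.sq_sqrt (by positivity)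
    have hlt : (σ * t / R) ^ 2 < 1 := by
      rw [div_pow, div_lt_one (by positivity), hRsq, mul_pow, hσ2]
      nlinarith
    have habs := (sq_lt_one_iff_abs_lt_one _).1 hlt
    have hc := abs_lt.1 habs
    have hcosθ : Real.cos (Real.arccos (σ * t / R)) = σ * t / R :=
      Real.cos_arccos hc.1.le hc.2.le
    have hsinθ : Real.sin (Real.arccos (σ * t / R)) = ρ / R := by
      rw [Real.sin_arccos]
      have : 1 - (σ * t / R) ^ 2 = (ρ / R) ^ 2 := by
        have h3 : R ≠ 0 := hRpos.ne'
        field_simp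
        linear_combination hRsq - t ^ 2 * hσ2
      rw [this, Real.sqrt_sq (by positivity)]
    have hmem : Real.arccos (σ * t / R) ∈ Ioo (0 : ℝ) π := by
      refine ⟨Real.arccos_pos.2 hc.2, lt_of_le_of_ne (Real.arccos_le_pi _) ?_⟩
      intro h
      rw [Real.arccos_eq_pi] at h
      linarith [hc.1]
    have := hA R ⟨hRpos, h1⟩ _ hmem
    rw [DD, hcosθ, hsinθ, mul_div_cancel₀ _ hRpos.ne', mul_div_cancel₀ _ hRpos.ne'] at this
    exact this
  have hz : Tendsto (fun t : ℝ => C' * t ^ β) (nhdsWithin 0 (Ioi 0)) (nhds 0) := by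
    have h := (Real.continuousAt_rpow_const 0 β (Or.inr hβ.le)).tendsto.const_mul C'
    rw [Real.zero_rpow hβ.ne', mul_zero] at h
    exact h.mono_left nhdsWithin_le_nhds
  have hle : |bp - Real.log (2 + 2 * b * σ) - A₀| ≤ 0 := by
    refine ge_of_tendsto hz ?_
    filter_upwards [Ioo_mem_nhdsGT (show (0 : ℝ) < 1 / 2 by norm_num)] with t ht
    exact key t ht
  have := abs_nonpos_iff.1 hle
  linarith

set_option maxHeartbeats 1000000

/-- Theorem `conicalsing`: expansion of the metric coefficient `𝛂`
near an extreme puncture, and the formula `𝐛₊ − 𝐛₋ = ln((1+b)/(1−b))` for the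
difference of logarithmic angle defects of the adjacent axis rods. -/
theorem statement_5
    (u v : E3 → ℝ)
    (hharm : HarmonicPair u v (B1 \ axisΓ))
    (haxiu : ∀ r θ φ φ' : ℝ, u (sph r θ φ) = u (sph r θ φ'))
    (haxiv : ∀ r θ φ φ' : ℝ, v (sph r θ φ) = v (sph r θ φ'))
    (a b α β C : ℝ) (ha : 0 < a) (hb : b ∈ Ioo (-1 : ℝ) 1)
    (hα : α ∈ Ioo (1 / 2 : ℝ) 1) (hβ : 0 < β) (hC : 0 < C)
    (htan : ∀ l k : ℕ, l + k ≤ 1 →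
      ∀ r ∈ Ioo (0 : ℝ) (1 / 2), ∀ θ ∈ Ioo (0 : ℝ) π, ∀ φ : ℝ,
        covNorm k (fun θ' φ' =>
            (Dr^[l] (fun s θ'' φ'' => u (sph s θ'' φ'') - uab a b θ'')) r θ' φ') θ φ
          + Real.exp ((3 + α - k) * uab a b θ) *
            covNorm k (fun θ' φ' =>
              (Dr^[l] (fun s θ'' φ'' => v (sph s θ'' φ'') - vab a b θ'')) r θ' φ') θ φ
        ≤ C * r ^ β)
    (A : ℝ → ℝ → ℝ)
    (hAreg : ContDiffOn ℝ 1 (fun p : ℝ × ℝ => A p.1 p.2)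
      {p : ℝ × ℝ | 0 < p.1 ∧ Real.sqrt (p.1 ^ 2 + p.2 ^ 2) < 1 / 2})
    (hAρ : ∀ p : ℝ × ℝ, 0 < p.1 → Real.sqrt (p.1 ^ 2 + p.2 ^ 2) < 1 / 2 →
      dρ A p.1 p.2 =
        2 * dρ (fun ρ z => u (cylPt ρ z)) p.1 p.2 + p.1⁻¹
          + p.1 * ((dρ (fun ρ z => u (cylPt ρ z)) p.1 p.2) ^ 2
              - (dz (fun ρ z => u (cylPt ρ z)) p.1 p.2) ^ 2
              + Real.exp (4 * u (cylPt p.1 p.2)) *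
                ((dρ (fun ρ z => v (cylPt ρ z)) p.1 p.2) ^ 2
                  - (dz (fun ρ z => v (cylPt ρ z)) p.1 p.2) ^ 2)))
    (hAz : ∀ p : ℝ × ℝ, 0 < p.1 → Real.sqrt (p.1 ^ 2 + p.2 ^ 2) < 1 / 2 →
      dz A p.1 p.2 =
        2 * dz (fun ρ z => u (cylPt ρ z)) p.1 p.2
          + 2 * p.1 * (dρ (fun ρ z => u (cylPt ρ z)) p.1 p.2
                * dz (fun ρ z => u (cylPt ρ z)) p.1 p.2
              + Real.exp (4 * u (cylPt p.1 p.2)) *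
                dρ (fun ρ z => v (cylPt ρ z)) p.1 p.2
                * dz (fun ρ z => v (cylPt ρ z)) p.1 p.2)) :
    ∃ A₀ : ℝ, ∃ C' > (0 : ℝ), ∃ β' > (0 : ℝ),
      (∀ r ∈ Ioo (0 : ℝ) (1 / 2), ∀ θ ∈ Ioo (0 : ℝ) π,
        |A (r * Real.sin θ) (r * Real.cos θ)
            - Real.log (1 + Real.cos θ ^ 2 + 2 * b * Real.cos θ) - A₀|
          ≤ C' * r ^ β') ∧
      ∀ bp bm : ℝ,
        (∀ z ∈ Ioo (0 : ℝ) (1 / 2),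
          Tendsto (fun ρ => A ρ z) (nhdsWithin 0 (Ioi 0)) (nhds bp)) →
        (∀ z ∈ Ioo (-(1 / 2) : ℝ) 0,
          Tendsto (fun ρ => A ρ z) (nhdsWithin 0 (Ioi 0)) (nhds bm)) →
        bp - bm = Real.log ((1 + b) / (1 - b)) := by
  obtain ⟨hu, hv, -⟩ := hharm
  obtain ⟨K, hK⟩ := tangent_bounds u v hu hv a b α β C ha hb hα hC htan
  -- regularity of `A`
  have hopen : IsOpen {p : ℝ × ℝ | 0 < p.1 ∧ Real.sqrt (p.1 ^ 2 + p.2 ^ 2) < 1 / 2} :=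
    (isOpen_lt continuous_const continuous_fst).inter
      (isOpen_lt (show Continuous fun p : ℝ × ℝ => Real.sqrt (p.1 ^ 2 + p.2 ^ 2) by fun_prop)
        continuous_const)
  have dA : ∀ r ∈ Ioo (0 : ℝ) (1 / 2), ∀ θ ∈ Ioo (0 : ℝ) π,
      DifferentiableAt ℝ (fun p : ℝ × ℝ => A p.1 p.2) (r * Real.sin θ, r * Real.cos θ) := by
    intro r hr θ hθ
    have hs : 0 < Real.sin θ := Real.sin_pos_of_mem_Ioo hθ
    refine (hAreg.differentiableOn (by norm_num)).differentiableAt (hopen.mem_nhds ⟨?_, ?_⟩)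
    · exact mul_pos hr.1 hs
    · show Real.sqrt ((r * Real.sin θ) ^ 2 + (r * Real.cos θ) ^ 2) < 1 / 2
      rw [sqrt_polar hr.1]; exact hr.2
  -- asymptotic estimates
  let S : Set (ℝ × ℝ) := Ioo (0 : ℝ) (1 / 2) ×ˢ Ioo (0 : ℝ) π
  let U : ℝ → ℝ → ℝ := fun ρ z => u (cylPt ρ z)
  let V : ℝ → ℝ → ℝ := fun ρ z => v (cylPt ρ z)
  let g : ℝ × ℝ → ℝ := fun t => t.1 ^ β
  let w : ℝ × ℝ → ℝ := fun t => u (cylPt (t.1 * Real.sin t.2) (t.1 * Real.cos t.2)) - uab a b t.2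
  let m : ℝ × ℝ → ℝ := fun t => Real.exp (2 * uab a b t.2)
  let s : ℝ × ℝ → ℝ := fun t => Real.sin t.2
  let c : ℝ × ℝ → ℝ := fun t => Real.cos t.2
  let x : ℝ × ℝ → ℝ := fun t => Real.sin t.2 * uq b t.2
  let Q0 : ℝ × ℝ → ℝ := fun t => m t * vq a b t.2
  let p : ℝ × ℝ → ℝ := fun t => Pr U t.1 t.2
  let d : ℝ × ℝ → ℝ := fun t => Pt U t.1 t.2 - uq b t.2
  let P : ℝ × ℝ → ℝ := fun t => m t * Pr V t.1 t.2
  let δ : ℝ × ℝ → ℝ := fun t => m t * (Pt V t.1 t.2 - vq a b t.2)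
  let E : ℝ × ℝ → ℝ := fun t => Real.exp (4 * w t)
  have hgpos : ∀ t ∈ S, 0 < g t := fun t ht => Real.rpow_pos_of_pos ht.1.1 β
  have hgle : ∀ t ∈ S, g t ≤ 1 := fun t ht =>
    Real.rpow_le_one ht.1.1.le (by linarith [ht.1.2]) hβ.le
  have mk : ∀ (f : ℝ × ℝ → ℝ) (K : ℝ), (∀ t ∈ S, |f t| ≤ K * g t) → f =O[Filter.principal S] g := by
    intro f K h
    rw [isBigO_principal]
    refine ⟨K, fun t ht => ?_⟩
    rw [Real.norm_eq_abs, Real.norm_eq_abs, abs_of_pos (hgpos t ht)]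
    exact h t ht
  have mk1 : ∀ (f : ℝ × ℝ → ℝ) (K : ℝ), (∀ t ∈ S, |f t| ≤ K) →
      f =O[Filter.principal S] (fun _ => (1 : ℝ)) := by
    intro f K h
    rw [isBigO_principal]
    refine ⟨K, fun t ht => ?_⟩
    simpa using h t ht
  have Og : g =O[Filter.principal S] (fun _ => (1 : ℝ)) := mk1 _ 1 fun t ht => by
    rw [abs_of_pos (hgpos t ht)]; exact hgle t ht
  have Os : s =O[Filter.principal S] (fun _ => (1 : ℝ)) := mk1 _ 1 fun t _ => Real.abs_sin_le_one _
  have Oc : c =O[Filter.principal S] (fun _ => (1 : ℝ)) := mk1 _ 1 fun t _ => Real.abs_cos_le_one _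
  have Op : p =O[Filter.principal S] g := mk _ K fun t ht => (hK t.1 ht.1 t.2 ht.2).2.1
  have Od : d =O[Filter.principal S] g := mk _ K fun t ht => (hK t.1 ht.1 t.2 ht.2).2.2.1
  have OP : P =O[Filter.principal S] g := mk _ K fun t ht => (hK t.1 ht.1 t.2 ht.2).2.2.2.1
  have Oδ : δ =O[Filter.principal S] g := mk _ K fun t ht => (hK t.1 ht.1 t.2 ht.2).2.2.2.2
  have OE : (fun t => E t - 1) =O[Filter.principal S] g := mk _ (4 * K * Real.exp (4 * K)) fun t ht => by
    have hw : |w t| ≤ K * g t := (hK t.1 ht.1 t.2 ht.2).1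
    have hK0 : 0 ≤ K := by
      by_contra hneg
      have := mul_neg_of_neg_of_pos (not_le.1 hneg) (hgpos t ht)
      linarith [abs_nonneg (w t)]
    have hw2 : |w t| ≤ K := by nlinarith [hgle t ht, hgpos t ht]
    have h4 : |4 * w t| = 4 * |w t| := by rw [abs_mul]; norm_num
    calc |E t - 1| ≤ |4 * w t| * Real.exp |4 * w t| := abs_exp_sub_one_le' _
      _ = 4 * |w t| * Real.exp (4 * |w t|) := by rw [h4]
      _ ≤ 4 * (K * g t) * Real.exp (4 * K) := by
        have h5 : 0 ≤ K * g t := mul_nonneg hK0 (hgpos t ht).le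
        gcongr
      _ = _ := by ring
  have hxeq : ∀ t ∈ S, x t = -(Real.cos t.2 + Real.sin t.2 ^ 2 * (Real.cos t.2 + b) / DD b t.2) := by
    intro t ht
    have hs : 0 < Real.sin t.2 := Real.sin_pos_of_mem_Ioo ht.2
    have hD := (DD_pos hb t.2).ne'
    simp only [x, uq]
    field_simp
    ring
  have hQeq : ∀ t ∈ S, Q0 t = -Real.sin t.2 * Real.sqrt (1 - b ^ 2) / DD b t.2 :=
    fun t ht => exp_mul_vab ha hb ht.2
  have hUnit : ∀ t ∈ S, x t ^ 2 + s t ^ 2 * Q0 t ^ 2 = 1 := by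
    intro t ht
    rw [hxeq t ht, hQeq t ht, neg_sq]
    exact unit_speed hb t.2
  have Ox : x =O[Filter.principal S] (fun _ => (1 : ℝ)) := mk1 _ 1 fun t ht => by
    rw [← sq_le_one_iff_abs_le_one]
    nlinarith [hUnit t ht, mul_nonneg (sq_nonneg (s t)) (sq_nonneg (Q0 t))]
  have OQ0 : Q0 =O[Filter.principal S] (fun _ => (1 : ℝ)) := mk1 _ (1 * Real.sqrt (1 - b ^ 2) / (1 - b ^ 2))
    fun t ht => by
      have hD := DD_pos hb t.2
      have h0 := one_sub_sq_pos hb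
      rw [hQeq t ht, abs_div, abs_mul, abs_neg, abs_of_pos hD, abs_of_nonneg (Real.sqrt_nonneg _)]
      gcongr
      · exact Real.abs_sin_le_one _
      · exact DD_lower b _
  have Er := err_r Og Os Oc Ox OQ0 Op Od OP Oδ OE
  have Et := err_t Og Os Oc Ox OQ0 Op Od OP Oδ OE
  rw [isBigO_principal] at Er Et
  obtain ⟨K1, hK1⟩ := Er
  obtain ⟨K2, hK2⟩ := Et
  have he : ∀ t ∈ S, Real.exp (4 * u (cylPt (t.1 * Real.sin t.2) (t.1 * Real.cos t.2)))
      = E t * m t ^ 2 := by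
    intro t _
    simp only [E, m, w]
    rw [← Real.exp_nat_mul, ← Real.exp_add]
    congr 1
    push_cast; ring
  have estR : ∀ r ∈ Ioo (0 : ℝ) (1 / 2), ∀ θ ∈ Ioo (0 : ℝ) π, |Pr A r θ| ≤ K1 * r ^ β := by
    intro r hr θ hθ
    have ht : (r, θ) ∈ S := ⟨hr, hθ⟩
    have hs : 0 < Real.sin θ := Real.sin_pos_of_mem_Ioo hθ
    have hsq : Real.sqrt ((r * Real.sin θ) ^ 2 + (r * Real.cos θ) ^ 2) < 1 / 2 := by
      rw [sqrt_polar hr.1]; exact hr.2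
    have h := hK1 (r, θ) ht
    rw [Real.norm_eq_abs, Real.norm_eq_abs, abs_of_pos (hgpos _ ht)] at h
    have e := id_r (m := m (r, θ)) (E := E (r, θ)) (q0 := uq b θ) (Q0 := Q0 (r, θ)) (d := d (r, θ))
      (P := P (r, θ)) (δ := δ (r, θ)) hr.1.ne' hs.ne'
      (Real.sin_sq_add_cos_sq θ) (p := Pr U r θ) rfl (q := Pt U r θ) rfl (p' := Pr V r θ) rfl
      (q' := Pt V r θ) rfl (by simp only [d]; ring) rfl (by simp only [Q0, δ]; ring)
      (he (r, θ) ht) (hUnit (r, θ) ht)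
      (hAρ (r * Real.sin θ, r * Real.cos θ) (mul_pos hr.1 hs) hsq)
      (hAz (r * Real.sin θ, r * Real.cos θ) (mul_pos hr.1 hs) hsq)
    have e' : Pr A r θ = _ := e
    rw [e']
    exact h
  have estT : ∀ r ∈ Ioo (0 : ℝ) (1 / 2), ∀ θ ∈ Ioo (0 : ℝ) π,
      |Pt A r θ - (-2 * Real.sin θ * (Real.cos θ + b) / DD b θ)| ≤ K2 * r ^ β := by
    intro r hr θ hθ
    have ht : (r, θ) ∈ S := ⟨hr, hθ⟩
    have hs : 0 < Real.sin θ := Real.sin_pos_of_mem_Ioo hθ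
    have hsq : Real.sqrt ((r * Real.sin θ) ^ 2 + (r * Real.cos θ) ^ 2) < 1 / 2 := by
      rw [sqrt_polar hr.1]; exact hr.2
    have h := hK2 (r, θ) ht
    rw [Real.norm_eq_abs, Real.norm_eq_abs, abs_of_pos (hgpos _ ht)] at h
    have e := id_t (m := m (r, θ)) (E := E (r, θ)) (q0 := uq b θ) (Q0 := Q0 (r, θ)) (d := d (r, θ))
      (P := P (r, θ)) (δ := δ (r, θ)) (Y0 := -(Real.sin θ * (Real.cos θ + b) / DD b θ))
      hr.1.ne' hs.ne'
      (Real.sin_sq_add_cos_sq θ) (p := Pr U r θ) rfl (q := Pt U r θ) rfl (p' := Pr V r θ) rfl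
      (q' := Pt V r θ) rfl (by simp only [d]; ring) rfl (by simp only [Q0, δ]; ring)
      (he (r, θ) ht) (hUnit (r, θ) ht) (by unfold uq; ring)
      (hAρ (r * Real.sin θ, r * Real.cos θ) (mul_pos hr.1 hs) hsq)
      (hAz (r * Real.sin θ, r * Real.cos θ) (mul_pos hr.1 hs) hsq)
    have e2 : Pt A r θ - (-2 * Real.sin θ * (Real.cos θ + b) / DD b θ)
      = Pt A r θ - 2 * -(Real.sin θ * (Real.cos θ + b) / DD b θ) := by ring
    have e' : Pt A r θ - 2 * -(Real.sin θ * (Real.cos θ + b) / DD b θ) = _ := e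
    rw [e2, e']
    exact h
  -- integrate
  have hmid : π / 2 ∈ Ioo (0 : ℝ) π := ⟨by positivity, by linarith [Real.pi_pos]⟩
  obtain ⟨A₁, hA₁⟩ := radial_limit (g := fun r => A (r * Real.sin (π / 2)) (r * Real.cos (π / 2)))
    hβ (fun r hr => hasDerivAt_rad (dA r hr _ hmid)) (fun r hr => estR r hr _ hmid)
  have hang : ∀ r ∈ Ioo (0 : ℝ) (1 / 2), ∀ θ ∈ Ioo (0 : ℝ) π,
      |(A (r * Real.sin θ) (r * Real.cos θ) - Real.log (DD b θ))
        - (A (r * Real.sin (π / 2)) (r * Real.cos (π / 2)) - Real.log (DD b (π / 2)))|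
        ≤ K2 * r ^ β * π := by
    intro r hr θ hθ
    have h := (convex_Ioo (0 : ℝ) π).norm_image_sub_le_of_norm_hasDerivWithin_le
      (f := fun θ => A (r * Real.sin θ) (r * Real.cos θ) - Real.log (DD b θ))
      (f' := fun θ => Pt A r θ - (-2 * Real.sin θ * (Real.cos θ + b) / DD b θ))
      (C := K2 * r ^ β)
      (fun t ht => ((hasDerivAt_ang (dA r hr t ht)).sub
        (hasDerivAt_logDD hb t)).hasDerivWithinAt)
      (fun t ht => estT r hr t ht) hmid hθ
    refine le_trans h ?_
    have h0 : 0 ≤ K2 * r ^ β := le_trans (abs_nonneg _) (estT r hr _ hθ)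
    apply mul_le_mul_of_nonneg_left _ h0
    rw [Real.norm_eq_abs, abs_le]
    constructor <;> linarith [hθ.1, hθ.2, Real.pi_pos]
  have main : ∀ r ∈ Ioo (0 : ℝ) (1 / 2), ∀ θ ∈ Ioo (0 : ℝ) π,
      |A (r * Real.sin θ) (r * Real.cos θ) - Real.log (DD b θ)
        - (A₁ - Real.log (DD b (π / 2)))| ≤ (|K1 / β + K2 * π| + 1) * r ^ β := by
    intro r hr θ hθ
    have h1 := abs_le.1 (hang r hr θ hθ)
    have h2 := abs_le.1 (hA₁ r hr)
    have h3 : (K1 / β + K2 * π) * r ^ β ≤ (|K1 / β + K2 * π| + 1) * r ^ β := by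
      have : 0 < r ^ β := Real.rpow_pos_of_pos hr.1 β
      exact mul_le_mul_of_nonneg_right (by linarith [le_abs_self (K1 / β + K2 * π)]) this.le
    rw [abs_le]
    constructor <;> linarith [h1.1, h1.2, h2.1, h2.2]
  refine ⟨A₁ - Real.log (DD b (π / 2)), |K1 / β + K2 * π| + 1, by positivity, β, hβ, main, ?_⟩
  intro bp bm hbp hbm
  have r1 := axis_limit (σ := 1) hb hβ (Or.inl rfl) main (fun t ht => by simpa using hbp t ht)
  have r2 := axis_limit (σ := -1) hb hβ (Or.inr rfl) main (fun t ht =>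
    hbm (-1 * t) ⟨by linarith [ht.2], by linarith [ht.1]⟩)
  have h1 : 0 < 1 + b := by linarith [hb.1]
  have h2 : 0 < 1 - b := by linarith [hb.2]
  rw [r1, r2, Real.log_div h1.ne' h2.ne',
    show 2 + 2 * b * 1 = 2 * (1 + b) by ring, show 2 + 2 * b * -1 = 2 * (1 - b) by ring,
    Real.log_mul two_ne_zero h1.ne', Real.log_mul two_ne_zero h2.ne']
  ring
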